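/- There exists a function G : ℂ×ℂ → ℂ that is holomorphic in each of its two variables separately on the domain (ℂ∖{1}) × (ℂ∖(−∞,0]), such that G(s,w) = ∑_{n=0}^∞ (n+w)^{−s} whenever Re(s) > 1 and w ∈ ℂ∖(−∞,0], and such that for each fixed w ∈ ℂ∖(−∞,0] one has (s−1)·G(s,w) → 1 as s → 1 with s ≠ 1 (i.e. the Hurwitz zeta function ζ(s,w) = G(s,w) has a simple pole at s = 1 with residue 1). -/

import Mathlib

open Complex Filter

/-- The real half-line `(−∞,0]` viewed inside `ℂ`. -/
def negRay : Set ℂ := {w : ℂ | ∃ x : ℝ, x ≤ 0 ∧ (x : ℂ) = w}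

/-!
For `1 < re s` one has `∂_w ζ(s, w) = -s ζ(s + 1, w)` and `ζ(s, 1) = ζ(s)`. Since the slit plane is
star-shaped about `1`, the fundamental theorem of calculus along the segment from `1` to `w` gives
`ζ(s, w) = ζ(s) - s (w - 1) ∫₀¹ ζ(s + 1, 1 + t (w - 1)) dt`.
In terms of `Z(s, w) = (s - 1) ζ(s, w)`, whose value at `s + 1` already contains the factor `s`,
this reads `Z(s, w) = (s - 1) ζ(s) - (s - 1) (w - 1) ∫₀¹ Z(s + 1, 1 + t (w - 1)) dt`. As
`(s - 1) ζ(s)` is entire with value `1` at `s = 1`, the right-hand side continues `Z` one unit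
further to the left each time it is applied, and shows that `Z(1, w) = 1`.
-/

open MeasureTheory Metric Set
open scoped Interval Real Topology

section ParametricIntegral

variable {X E : Type*} [TopologicalSpace X] [NormedAddCommGroup E] {a b : ℝ}

theorem continuousOn_intervalIntegral_param [NormedSpace ℝ E] {F : X → ℝ → E} {U : Set X}
    (hF : ContinuousOn F.uncurry (U ×ˢ [[a, b]])) :
    ContinuousOn (fun x ↦ ∫ t in a..b, F x t) U := by
  let proj (t : ℝ) : ℝ := projIcc (a ⊓ b) (a ⊔ b) inf_le_sup t
  have continuous_ext : Continuous (Function.uncurry fun (x : U) (t : ℝ) ↦ F x (proj t)) :=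
    hF.comp_continuous (f := fun p : U × ℝ ↦ ((p.1 : X), proj p.2)) (by fun_prop)
      fun p ↦ ⟨p.1.2, (projIcc _ _ inf_le_sup p.2).2⟩
  rw [continuousOn_iff_continuous_domRestrict]
  convert! intervalIntegral.continuous_parametric_intervalIntegral_of_continuous'
    (μ := volume) continuous_ext a b using 2 with x
  exact intervalIntegral.integral_congr fun t ht ↦ by simp [proj, projIcc_of_mem inf_le_sup ht]

theorem intervalIntegral_swap_of_continuousOn [NormedSpace ℝ E] {F : ℝ → ℝ → E} {c d : ℝ}
    (hF : ContinuousOn F.uncurry ([[a, b]] ×ˢ [[c, d]])) :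
    ∫ x in a..b, ∫ y in c..d, F x y = ∫ y in c..d, ∫ x in a..b, F x y :=
  intervalIntegral_intervalIntegral_swap <|
    (hF.integrableOn_compact (isCompact_uIcc.prod isCompact_uIcc)).mono_set
      (prod_mono uIoc_subset_uIcc uIoc_subset_uIcc)

variable [NormedSpace ℂ E] {F : ℂ → ℝ → E} {U : Set ℂ}

theorem wedgeIntegral_intervalIntegral {z w : ℂ} (hzw : Rectangle z w ⊆ U)
    (hF : ContinuousOn F.uncurry (U ×ˢ [[a, b]])) :
    wedgeIntegral z w (fun x ↦ ∫ t in a..b, F x t) =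
      ∫ t in a..b, wedgeIntegral z w (F · t) := by
  have horizontal : ContinuousOn (Function.uncurry fun (x t : ℝ) ↦ F (x + z.im * I) t)
      ([[z.re, w.re]] ×ˢ [[a, b]]) :=
    hF.comp (f := fun p : ℝ × ℝ ↦ ((p.1 : ℂ) + z.im * I, p.2)) (by fun_prop)
      fun p hp ↦ ⟨hzw <| by simpa [Rectangle, mem_reProdIm] using hp.1, hp.2⟩
  have vertical : ContinuousOn (Function.uncurry fun (y t : ℝ) ↦ F (w.re + y * I) t)
      ([[z.im, w.im]] ×ˢ [[a, b]]) :=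
    hF.comp (f := fun p : ℝ × ℝ ↦ ((w.re : ℂ) + p.1 * I, p.2)) (by fun_prop)
      fun p hp ↦ ⟨hzw <| by simpa [Rectangle, mem_reProdIm] using hp.1, hp.2⟩
  have integrable_inner {G : ℝ → ℝ → E} {c d : ℝ}
      (hG : ContinuousOn G.uncurry ([[c, d]] ×ˢ [[a, b]])) :
      IntervalIntegrable (fun t ↦ ∫ x in c..d, G x t) volume a b :=
    (continuousOn_intervalIntegral_param (F := fun t x ↦ G x t) <|
      hG.comp continuous_swap.continuousOn fun _ hp ↦ ⟨hp.2, hp.1⟩).intervalIntegrable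
  simp only [wedgeIntegral]
  rw [intervalIntegral_swap_of_continuousOn horizontal,
    intervalIntegral_swap_of_continuousOn vertical, ← intervalIntegral.integral_smul]
  exact (intervalIntegral.integral_add (integrable_inner horizontal)
    ((integrable_inner vertical).smul I)).symm

/-- Morera's theorem: by Fubini, the integral over a rectangle is an integral of zeros. -/
theorem differentiableOn_intervalIntegral_param [CompleteSpace E] (hU : IsOpen U)
    (hF : ContinuousOn F.uncurry (U ×ˢ [[a, b]]))
    (hd : ∀ t ∈ [[a, b]], DifferentiableOn ℂ (F · t) U) :
    DifferentiableOn ℂ (fun z ↦ ∫ t in a..b, F z t) U := by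
  refine (isConservativeOn_and_continuousOn_iff_isDifferentiableOn hU).1
    ⟨fun z w hzw ↦ ?_, continuousOn_intervalIntegral_param hF⟩
  have hwz : Rectangle w z ⊆ U := by
    simpa only [Rectangle, uIcc_comm z.re, uIcc_comm z.im] using hzw
  calc
    wedgeIntegral z w (fun x ↦ ∫ t in a..b, F x t)
      = ∫ t in a..b, wedgeIntegral z w (F · t) := wedgeIntegral_intervalIntegral hzw hF
    _ = ∫ t in a..b, -wedgeIntegral w z (F · t) :=
      intervalIntegral.integral_congr fun t ht ↦ (hd t ht).isConservativeOn z w hzw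
    _ = -wedgeIntegral w z (fun x ↦ ∫ t in a..b, F x t) := by
      rw [intervalIntegral.integral_neg, wedgeIntegral_intervalIntegral hwz hF]

end ParametricIntegral

/-- Holomorphy of a function of two complex variables on `U ×ˢ V`, in the form of Osgood's lemma:
joint continuity together with holomorphy in each variable. -/
structure SeparatelyHolomorphicOn (f : ℂ → ℂ → ℂ) (U V : Set ℂ) : Prop where
  continuousOn : ContinuousOn f.uncurry (U ×ˢ V)
  differentiableOn_left : ∀ w ∈ V, DifferentiableOn ℂ (f · w) U
  differentiableOn_right : ∀ z ∈ U, DifferentiableOn ℂ (f z) V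

namespace SeparatelyHolomorphicOn

variable {f g : ℂ → ℂ → ℂ} {U U' V : Set ℂ}

theorem of_left {h : ℂ → ℂ} (hh : DifferentiableOn ℂ h U) :
    SeparatelyHolomorphicOn (fun z _ ↦ h z) U V where
  continuousOn := hh.continuousOn.comp continuousOn_fst fun _ hp ↦ hp.1
  differentiableOn_left _ _ := hh
  differentiableOn_right _ _ := differentiableOn_const _

theorem of_right {h : ℂ → ℂ} (hh : DifferentiableOn ℂ h V) :
    SeparatelyHolomorphicOn (fun _ w ↦ h w) U V where
  continuousOn := hh.continuousOn.comp continuousOn_snd fun _ hp ↦ hp.2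
  differentiableOn_left _ _ := differentiableOn_const _
  differentiableOn_right _ _ := hh

theorem sub (hf : SeparatelyHolomorphicOn f U V) (hg : SeparatelyHolomorphicOn g U V) :
    SeparatelyHolomorphicOn (fun z w ↦ f z w - g z w) U V where
  continuousOn := hf.continuousOn.sub hg.continuousOn
  differentiableOn_left w hw := (hf.differentiableOn_left w hw).sub (hg.differentiableOn_left w hw)
  differentiableOn_right z hz :=
    (hf.differentiableOn_right z hz).sub (hg.differentiableOn_right z hz)

theorem mul (hf : SeparatelyHolomorphicOn f U V) (hg : SeparatelyHolomorphicOn g U V) :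
    SeparatelyHolomorphicOn (fun z w ↦ f z w * g z w) U V where
  continuousOn := hf.continuousOn.mul hg.continuousOn
  differentiableOn_left w hw := (hf.differentiableOn_left w hw).mul (hg.differentiableOn_left w hw)
  differentiableOn_right z hz :=
    (hf.differentiableOn_right z hz).mul (hg.differentiableOn_right z hz)

theorem comp_left (hf : SeparatelyHolomorphicOn f U V) {h : ℂ → ℂ} (hh : DifferentiableOn ℂ h U')
    (hmaps : MapsTo h U' U) : SeparatelyHolomorphicOn (fun z w ↦ f (h z) w) U' V where
  continuousOn := hf.continuousOn.comp (f := Prod.map h id)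
    (hh.continuousOn.prodMap continuousOn_id) fun _ hp ↦ ⟨hmaps hp.1, hp.2⟩
  differentiableOn_left w hw := (hf.differentiableOn_left w hw).comp hh hmaps
  differentiableOn_right z hz := hf.differentiableOn_right (h z) (hmaps hz)

theorem integral_segment (hf : SeparatelyHolomorphicOn f U V) (hU : IsOpen U) (hV : IsOpen V)
    {c : ℂ} (hc : StarConvex ℝ c V) :
    SeparatelyHolomorphicOn (fun z w ↦ ∫ t in (0 : ℝ)..1, f z (c + t • (w - c))) U V := by
  have segment_mem {w : ℂ} (hw : w ∈ V) {t : ℝ} (ht : t ∈ [[0, 1]]) : c + t • (w - c) ∈ V := by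
    rw [uIcc_of_le zero_le_one] at ht
    exact hc.add_smul_sub_mem hw ht.1 ht.2
  refine ⟨?_, fun w hw ↦ ?_, fun z hz ↦ ?_⟩
  · exact continuousOn_intervalIntegral_param
      (F := fun (p : ℂ × ℂ) (t : ℝ) ↦ f p.1 (c + t • (p.2 - c))) <|
      hf.continuousOn.comp (f := fun q : (ℂ × ℂ) × ℝ ↦ (q.1.1, c + q.2 • (q.1.2 - c)))
        (by fun_prop) fun q hq ↦ ⟨hq.1.1, segment_mem hq.1.2 hq.2⟩
  · refine differentiableOn_intervalIntegral_param hU ?_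
      fun t ht ↦ hf.differentiableOn_left _ (segment_mem hw ht)
    exact hf.continuousOn.comp (f := fun q : ℂ × ℝ ↦ (q.1, c + q.2 • (w - c)))
      (by fun_prop) fun q hq ↦ ⟨hq.1, segment_mem hw hq.2⟩
  · refine differentiableOn_intervalIntegral_param hV ?_ fun t ht ↦
      (hf.differentiableOn_right z hz).comp (f := fun w ↦ c + t • (w - c)) (by fun_prop)
        fun w hw ↦ segment_mem hw ht
    exact hf.continuousOn.comp (f := fun q : ℂ × ℝ ↦ (z, c + q.2 • (q.1 - c)))
      (by fun_prop) fun q hq ↦ ⟨hz, segment_mem hq.1 hq.2⟩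

end SeparatelyHolomorphicOn

theorem hasSum_deriv_of_summableLocallyUniformlyOn {ι E : Type*} [NormedAddCommGroup E]
    [NormedSpace ℂ E] [CompleteSpace E] {f : ι → ℂ → E} {U : Set ℂ} {z : ℂ}
    (hf : SummableLocallyUniformlyOn f U) (hd : ∀ n, DifferentiableOn ℂ (f n) U)
    (hU : IsOpen U) (hz : z ∈ U) :
    HasSum (fun n ↦ deriv (f n) z) (deriv (fun w ↦ ∑' n, f n w) z) := by
  have deriv_finsetSum (t : Finset ι) :
      deriv (fun w ↦ ∑ n ∈ t, f n w) z = ∑ n ∈ t, deriv (f n) z :=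
    deriv_fun_sum fun n _ ↦ (hd n).differentiableAt (hU.mem_nhds hz)
  simpa only [HasSum, SummationFilter.unconditional_filter, Function.comp_def, deriv_finsetSum]
    using ((hasSumLocallyUniformlyOn_iff_tendstoLocallyUniformlyOn.1
      hf.hasSumLocallyUniformlyOn).deriv
        (.of_forall fun t ↦ .fun_sum fun n _ ↦ hd n) hU).tendsto_at hz

theorem notMem_negRay_iff {w : ℂ} : w ∉ negRay ↔ w ∈ slitPlane := by
  rw [mem_slitPlane_iff_not_le_zero, Complex.le_def]
  refine not_congr ⟨?_, fun h ↦ ⟨w.re, h.1, Complex.ext rfl h.2.symm⟩⟩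
  rintro ⟨x, hx, rfl⟩
  exact ⟨hx, rfl⟩

theorem natCast_add_mem_slitPlane {w : ℂ} (hw : w ∈ slitPlane) (n : ℕ) :
    (n : ℂ) + w ∈ slitPlane := by
  rw [mem_slitPlane_iff] at hw ⊢
  refine hw.imp (fun hre ↦ ?_) fun him ↦ by simpa using him
  simpa using add_pos_of_nonneg_of_pos n.cast_nonneg hre

theorem infDist_compl_slitPlane_le_norm_natCast_add (n : ℕ) (w : ℂ) :
    infDist w slitPlaneᶜ ≤ ‖(n : ℂ) + w‖ := by
  have neg_notMem : -(n : ℂ) ∈ slitPlaneᶜ := by simp [mem_slitPlane_iff]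
  simpa [dist_eq_norm, add_comm] using infDist_le_dist_of_mem (x := w) neg_notMem

theorem infDist_compl_slitPlane_pos {w : ℂ} (hw : w ∈ slitPlane) : 0 < infDist w slitPlaneᶜ :=
  (isOpen_slitPlane.isClosed_compl.notMem_iff_infDist_pos ⟨0, by simp⟩).1 (by simpa using hw)

theorem exists_continuousOn_mul_natCast_add_one_le_norm :
    ∃ c : ℂ → ℝ, ContinuousOn c slitPlane ∧
      ∀ w ∈ slitPlane, 0 < c w ∧ ∀ n : ℕ, c w * (n + 1) ≤ ‖(n : ℂ) + w‖ := by
  let d (w : ℂ) : ℝ := infDist w slitPlaneᶜ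
  have denom_pos {w : ℂ} (hw : w ∈ slitPlane) : 0 < d w + ‖1 - w‖ :=
    add_pos_of_pos_of_nonneg (infDist_compl_slitPlane_pos hw) (norm_nonneg _)
  have continuous_d : Continuous d := continuous_infDist_pt _
  refine ⟨fun w ↦ d w / (d w + ‖1 - w‖),
    continuous_d.continuousOn.div (by fun_prop) fun w hw ↦ (denom_pos hw).ne', fun w hw ↦
    ⟨div_pos (infDist_compl_slitPlane_pos hw) (denom_pos hw), fun n ↦ ?_⟩⟩
  have d_le : d w ≤ ‖(n : ℂ) + w‖ := infDist_compl_slitPlane_le_norm_natCast_add n w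
  have triangle : (n + 1 : ℝ) ≤ ‖(n : ℂ) + w‖ + ‖1 - w‖ := by
    have norm_eq : ‖(n + 1 : ℂ)‖ = n + 1 := mod_cast Complex.norm_natCast (n + 1)
    simpa only [← norm_eq, add_add_sub_cancel] using norm_add_le ((n : ℂ) + w) (1 - w)
  rw [div_mul_eq_mul_div, div_le_iff₀ (denom_pos hw)]
  calc
    d w * (n + 1) ≤ d w * (‖(n : ℂ) + w‖ + ‖1 - w‖) :=
      mul_le_mul_of_nonneg_left triangle infDist_nonneg
    _ ≤ ‖(n : ℂ) + w‖ * (d w + ‖1 - w‖) := by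
      linarith [mul_le_mul_of_nonneg_right d_le (norm_nonneg (1 - w))]

theorem norm_cpow_le_rpow_mul_exp_pi_abs_im (z s : ℂ) :
    ‖z ^ s‖ ≤ ‖z‖ ^ s.re * Real.exp (π * |s.im|) := by
  refine (norm_cpow_le z s).trans ?_
  rw [div_eq_mul_inv, ← Real.exp_neg]
  gcongr
  calc
    -(z.arg * s.im) ≤ |z.arg| * |s.im| := (neg_le_abs _).trans_eq (abs_mul _ _)
    _ ≤ π * |s.im| := by gcongr; exact abs_arg_le_pi z

theorem norm_natCast_add_cpow_neg_le {c : ℝ} {n : ℕ} {s w : ℂ} (hc : 0 < c)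
    (hcn : c * (n + 1) ≤ ‖(n : ℂ) + w‖) (hs : 0 ≤ s.re) :
    ‖((n : ℂ) + w) ^ (-s)‖ ≤ c ^ (-s.re) * Real.exp (π * |s.im|) * (n + 1 : ℝ) ^ (-s.re) := by
  calc
    ‖((n : ℂ) + w) ^ (-s)‖ ≤ ‖(n : ℂ) + w‖ ^ (-s.re) * Real.exp (π * |s.im|) := by
      simpa using norm_cpow_le_rpow_mul_exp_pi_abs_im ((n : ℂ) + w) (-s)
    _ ≤ (c * (n + 1)) ^ (-s.re) * Real.exp (π * |s.im|) := by
      gcongr ?_ * _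
      exact Real.rpow_le_rpow_of_nonpos (by positivity) hcn (neg_nonpos.2 hs)
    _ = c ^ (-s.re) * Real.exp (π * |s.im|) * (n + 1 : ℝ) ^ (-s.re) := by
      rw [Real.mul_rpow hc.le (by positivity), mul_right_comm]

theorem isOpen_setOf_lt_re (a : ℝ) : IsOpen {s : ℂ | a < s.re} :=
  isOpen_lt continuous_const continuous_re

theorem summableLocallyUniformlyOn_natCast_add_cpow_neg :
    SummableLocallyUniformlyOn (fun (n : ℕ) (p : ℂ × ℂ) ↦ ((n : ℂ) + p.2) ^ (-p.1))
      ({s | 1 < s.re} ×ˢ slitPlane) := by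
  refine SummableLocallyUniformlyOn_of_locally_bounded
    ((isOpen_setOf_lt_re 1).prod isOpen_slitPlane) fun K hK hKc ↦ ?_
  obtain ⟨c, continuousOn_c, hc⟩ := exists_continuousOn_mul_natCast_add_one_le_norm
  obtain ⟨σ, one_lt_σ, σ_le⟩ := hKc.exists_forall_le' (a := 1)
    (f := fun p : ℂ × ℂ ↦ p.1.re) (by fun_prop) fun p hp ↦ (hK hp).1
  have continuousOn_factor : ContinuousOn
      (fun p : ℂ × ℂ ↦ c p.2 ^ (-p.1.re) * Real.exp (π * |p.1.im|)) K :=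
    ((continuousOn_c.comp continuousOn_snd fun p hp ↦ (hK hp).2).rpow (by fun_prop)
      fun p hp ↦ .inl (hc p.2 (hK hp).2).1.ne').mul (by fun_prop)
  obtain ⟨C, hC⟩ := hKc.exists_bound_of_continuousOn continuousOn_factor
  have summable_rpow : Summable fun n : ℕ ↦ ((n + 1 : ℕ) : ℝ) ^ (-σ) :=
    (summable_nat_add_iff 1).2 (Real.summable_nat_rpow.2 (neg_lt_neg one_lt_σ))
  refine ⟨fun n ↦ C * ((n + 1 : ℕ) : ℝ) ^ (-σ), summable_rpow.mul_left C, fun n p hp ↦ ?_⟩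
  have one_lt_re : 1 < p.1.re := (hK hp).1
  obtain ⟨c_pos, c_le⟩ := hc p.2 (hK hp).2
  calc
    ‖((n : ℂ) + p.2) ^ (-p.1)‖
      ≤ c p.2 ^ (-p.1.re) * Real.exp (π * |p.1.im|) * (n + 1 : ℝ) ^ (-p.1.re) :=
      norm_natCast_add_cpow_neg_le c_pos (c_le n) (by linarith)
    _ ≤ C * (n + 1 : ℝ) ^ (-σ) := by
      gcongr
      · exact (norm_nonneg _).trans (hC p hp)
      · exact (Real.le_norm_self _).trans (hC p hp)
      · exact le_add_of_nonneg_left n.cast_nonneg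
      · exact σ_le p hp
    _ = C * ((n + 1 : ℕ) : ℝ) ^ (-σ) := by push_cast; rfl

/-- The Dirichlet series of the Hurwitz zeta function, convergent for `1 < s.re`; outside that
half-plane `tsum` takes the junk value `0`. -/
noncomputable def hurwitzSeries (s w : ℂ) : ℂ :=
  ∑' n : ℕ, ((n : ℂ) + w) ^ (-s)

section hurwitzSeries

variable {s w : ℂ}

theorem summableLocallyUniformlyOn_natCast_add_cpow_neg_right (hs : 1 < s.re) :
    SummableLocallyUniformlyOn (fun (n : ℕ) (w : ℂ) ↦ ((n : ℂ) + w) ^ (-s)) slitPlane :=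
  summableLocallyUniformlyOn_natCast_add_cpow_neg.comp (fun w ↦ (s, w)) (fun _ hw ↦ ⟨hs, hw⟩)
    (by fun_prop)

theorem hasDerivAt_natCast_add_cpow_neg (n : ℕ) (hw : w ∈ slitPlane) :
    HasDerivAt (fun w : ℂ ↦ ((n : ℂ) + w) ^ (-s)) (-s * ((n : ℂ) + w) ^ (-(s + 1))) w := by
  simpa only [id_eq, mul_one, neg_add'] using
    ((hasDerivAt_id w).const_add (n : ℂ)).cpow_const (c := -s) (natCast_add_mem_slitPlane hw n)

theorem differentiableOn_natCast_add_cpow_neg (n : ℕ) (s : ℂ) :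
    DifferentiableOn ℂ (fun w : ℂ ↦ ((n : ℂ) + w) ^ (-s)) slitPlane :=
  fun _ hw ↦ (hasDerivAt_natCast_add_cpow_neg n hw).differentiableAt.differentiableWithinAt

theorem separatelyHolomorphicOn_hurwitzSeries :
    SeparatelyHolomorphicOn hurwitzSeries {s | 1 < s.re} slitPlane where
  continuousOn := by
    refine (hasSumLocallyUniformlyOn_iff_tendstoLocallyUniformlyOn.1
      summableLocallyUniformlyOn_natCast_add_cpow_neg.hasSumLocallyUniformlyOn).continuousOn
        (.of_forall fun t ↦ continuousOn_finsetSum t fun n _ ↦ ?_)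
    exact ContinuousOn.cpow (by fun_prop) (by fun_prop) fun p hp ↦ natCast_add_mem_slitPlane hp.2 n
  differentiableOn_left w hw := by
    refine (summableLocallyUniformlyOn_natCast_add_cpow_neg.comp (fun s ↦ (s, w))
      (fun _ hs ↦ ⟨hs, hw⟩) (by fun_prop)).differentiableOn (isOpen_setOf_lt_re 1) fun n s _ ↦ ?_
    exact differentiableAt_id.neg.const_cpow
      (.inl (slitPlane_ne_zero (natCast_add_mem_slitPlane hw n)))
  differentiableOn_right s hs :=
    (summableLocallyUniformlyOn_natCast_add_cpow_neg_right hs).differentiableOn isOpen_slitPlane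
      fun n _ hw ↦ (hasDerivAt_natCast_add_cpow_neg n hw).differentiableAt

theorem hasDerivAt_hurwitzSeries (hs : 1 < s.re) (hw : w ∈ slitPlane) :
    HasDerivAt (hurwitzSeries s) (-s * hurwitzSeries (s + 1) w) w := by
  have differentiableAt : DifferentiableAt ℂ (hurwitzSeries s) w :=
    (separatelyHolomorphicOn_hurwitzSeries.differentiableOn_right s hs).differentiableAt
      (isOpen_slitPlane.mem_nhds hw)
  suffices deriv (hurwitzSeries s) w = -s * hurwitzSeries (s + 1) w from
    this ▸ differentiableAt.hasDerivAt
  calc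
    deriv (hurwitzSeries s) w = ∑' n : ℕ, deriv (fun w ↦ ((n : ℂ) + w) ^ (-s)) w :=
      (hasSum_deriv_of_summableLocallyUniformlyOn
        (summableLocallyUniformlyOn_natCast_add_cpow_neg_right hs)
        (differentiableOn_natCast_add_cpow_neg · s) isOpen_slitPlane hw).tsum_eq.symm
    _ = ∑' n : ℕ, -s * ((n : ℂ) + w) ^ (-(s + 1)) :=
      tsum_congr fun n ↦ (hasDerivAt_natCast_add_cpow_neg n hw).deriv
    _ = -s * hurwitzSeries (s + 1) w := tsum_mul_left

theorem hurwitzSeries_one_right (hs : 1 < s.re) : hurwitzSeries s 1 = riemannZeta s := by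
  simp only [hurwitzSeries, zeta_eq_tsum_one_div_nat_add_one_cpow hs, cpow_neg, one_div]

theorem one_add_smul_sub_one_mem_slitPlane (hw : w ∈ slitPlane) {t : ℝ} (ht : t ∈ Icc 0 1) :
    1 + t • (w - 1) ∈ slitPlane :=
  starConvex_one_slitPlane.add_smul_sub_mem hw ht.1 ht.2

theorem hurwitzSeries_eq_riemannZeta_sub (hs : 1 < s.re) (hw : w ∈ slitPlane) :
    hurwitzSeries s w = riemannZeta s -
      s * (w - 1) * ∫ t in (0 : ℝ)..1, hurwitzSeries (s + 1) (1 + t • (w - 1)) := by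
  have hs' : 1 < (s + 1).re := by simpa using hs.trans (lt_add_one _)
  have continuousOn_deriv :
      ContinuousOn (fun t : ℝ ↦ -s * hurwitzSeries (s + 1) (1 + t • (w - 1))) (Icc 0 1) :=
    continuousOn_const.mul <|
      (separatelyHolomorphicOn_hurwitzSeries.differentiableOn_right _ hs').continuousOn.comp
        (by fun_prop) fun t ht ↦ one_add_smul_sub_one_mem_slitPlane hw ht
  have ftc := intervalIntegral.integral_unitInterval_deriv_eq_sub
    (f' := fun w ↦ -s * hurwitzSeries (s + 1) w) continuousOn_deriv
    fun t ht ↦ hasDerivAt_hurwitzSeries hs (one_add_smul_sub_one_mem_slitPlane hw ht)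
  rw [intervalIntegral.integral_const_mul, add_sub_cancel, hurwitzSeries_one_right hs,
    smul_eq_mul] at ftc
  linear_combination -ftc

end hurwitzSeries

/-- The function `(s - 1) ζ(s, w)` on the half-plane `1 - k < s.re`, obtained from its Dirichlet
series by `k` applications of the integral formula of `hurwitzSeries_eq_riemannZeta_sub`. -/
noncomputable def hurwitzZeta₁OnHalfPlane : ℕ → ℂ → ℂ → ℂ
  | 0, s, w => (s - 1) * hurwitzSeries s w
  | k + 1, s, w => riemannZeta₁ s - (s - 1) * (w - 1) *
      ∫ t in (0 : ℝ)..1, hurwitzZeta₁OnHalfPlane k (s + 1) (1 + t • (w - 1))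

theorem separatelyHolomorphicOn_hurwitzZeta₁OnHalfPlane (k : ℕ) :
    SeparatelyHolomorphicOn (hurwitzZeta₁OnHalfPlane k) {s | 1 - (k : ℝ) < s.re} slitPlane := by
  induction k with
  | zero =>
    simpa [hurwitzZeta₁OnHalfPlane] using
      (SeparatelyHolomorphicOn.of_left (h := (· - 1)) (by fun_prop)).mul
        separatelyHolomorphicOn_hurwitzSeries
  | succ k ih =>
    have shift : MapsTo (· + 1) {s : ℂ | 1 - ((k + 1 : ℕ) : ℝ) < s.re}
        {s | 1 - (k : ℝ) < s.re} := fun s (hs : _ < s.re) ↦ by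
      push_cast at hs
      simpa using by linarith
    exact (SeparatelyHolomorphicOn.of_left differentiable_riemannZeta₁.differentiableOn).sub <|
      ((SeparatelyHolomorphicOn.of_left (h := (· - 1)) (by fun_prop)).mul
        (.of_right (h := (· - 1)) (by fun_prop))).mul <|
      (ih.integral_segment (isOpen_setOf_lt_re _) isOpen_slitPlane
        starConvex_one_slitPlane).comp_left (h := (· + 1)) (by fun_prop) shift

theorem hurwitzZeta₁OnHalfPlane_succ_eq (k : ℕ) {s w : ℂ} (hs : 1 - (k : ℝ) < s.re)
    (hw : w ∈ slitPlane) :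
    hurwitzZeta₁OnHalfPlane (k + 1) s w = hurwitzZeta₁OnHalfPlane k s w := by
  induction k generalizing s w with
  | zero =>
    have one_lt_re : 1 < s.re := by simpa using hs
    have hs1 : s - 1 ≠ 0 := sub_ne_zero.2 <| by rintro rfl; simp at one_lt_re
    simp only [hurwitzZeta₁OnHalfPlane, add_sub_cancel_right]
    rw [intervalIntegral.integral_const_mul, hurwitzSeries_eq_riemannZeta_sub one_lt_re hw,
      riemannZeta_eq_inv_sub_mul (sub_ne_zero.1 hs1)]
    field_simp
  | succ k ih =>
    rw [hurwitzZeta₁OnHalfPlane, hurwitzZeta₁OnHalfPlane]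
    congr 2
    refine intervalIntegral.integral_congr fun t ht ↦ ih ?_ ?_
    · push_cast at hs
      simpa using by linarith
    · exact one_add_smul_sub_one_mem_slitPlane hw (by rwa [uIcc_of_le zero_le_one] at ht)

theorem hurwitzZeta₁OnHalfPlane_eq_of_le {j k : ℕ} (hjk : j ≤ k) {s w : ℂ}
    (hs : 1 - (j : ℝ) < s.re) (hw : w ∈ slitPlane) :
    hurwitzZeta₁OnHalfPlane k s w = hurwitzZeta₁OnHalfPlane j s w := by
  induction k, hjk using Nat.le_induction with
  | base => rfl
  | succ k hjk ih =>
    have cast_le : (j : ℝ) ≤ k := mod_cast hjk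
    rw [hurwitzZeta₁OnHalfPlane_succ_eq k (by linarith) hw, ih]

/-- The function `(s - 1) ζ(s, w)` for all `s`; the index `⌊2 - s.re⌋₊` is large enough that `s`
lies in the half-plane where the approximant is meaningful. -/
noncomputable def hurwitzZeta₁ (s w : ℂ) : ℂ :=
  hurwitzZeta₁OnHalfPlane ⌊2 - s.re⌋₊ s w

section hurwitzZeta₁

variable {s w : ℂ}

theorem hurwitzZeta₁_eq {k : ℕ} (hs : 1 - (k : ℝ) < s.re) (hw : w ∈ slitPlane) :
    hurwitzZeta₁ s w = hurwitzZeta₁OnHalfPlane k s w := by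
  have floor_spec : 1 - (⌊2 - s.re⌋₊ : ℝ) < s.re := by
    linarith [Nat.sub_one_lt_floor (2 - s.re)]
  obtain h | h := le_total k ⌊2 - s.re⌋₊
  · exact hurwitzZeta₁OnHalfPlane_eq_of_le h hs hw
  · exact (hurwitzZeta₁OnHalfPlane_eq_of_le h floor_spec hw).symm

theorem hurwitzZeta₁_eq_sub_one_mul_hurwitzSeries (hs : 1 < s.re) (hw : w ∈ slitPlane) :
    hurwitzZeta₁ s w = (s - 1) * hurwitzSeries s w :=
  hurwitzZeta₁_eq (k := 0) (by simpa using hs) hw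

theorem hurwitzZeta₁_one_left (hw : w ∈ slitPlane) : hurwitzZeta₁ 1 w = 1 := by
  rw [hurwitzZeta₁_eq (k := 1) (by simp) hw]
  simp [hurwitzZeta₁OnHalfPlane]

theorem differentiableAt_hurwitzZeta₁_left (s : ℂ) (hw : w ∈ slitPlane) :
    DifferentiableAt ℂ (hurwitzZeta₁ · w) s := by
  obtain ⟨k, hk⟩ := exists_nat_gt (1 - s.re)
  have mem_nhds : {s : ℂ | 1 - (k : ℝ) < s.re} ∈ 𝓝 s :=
    (isOpen_setOf_lt_re _).mem_nhds (sub_lt_comm.1 hk)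
  refine ((separatelyHolomorphicOn_hurwitzZeta₁OnHalfPlane k).differentiableOn_left w hw
    |>.differentiableAt mem_nhds).congr_of_eventuallyEq ?_
  filter_upwards [mem_nhds] with s hs using hurwitzZeta₁_eq hs hw

theorem differentiableAt_hurwitzZeta₁_right (s : ℂ) (hw : w ∈ slitPlane) :
    DifferentiableAt ℂ (hurwitzZeta₁ s) w :=
  ((separatelyHolomorphicOn_hurwitzZeta₁OnHalfPlane ⌊2 - s.re⌋₊).differentiableOn_right s
    (by simpa using by linarith [Nat.sub_one_lt_floor (2 - s.re)])).differentiableAt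
      (isOpen_slitPlane.mem_nhds hw)

theorem tendsto_hurwitzZeta₁_nhds_one (hw : w ∈ slitPlane) :
    Tendsto (hurwitzZeta₁ · w) (𝓝 1) (𝓝 1) := by
  simpa only [hurwitzZeta₁_one_left hw] using
    (differentiableAt_hurwitzZeta₁_left 1 hw).continuousAt.tendsto

end hurwitzZeta₁

theorem hurwitz_zeta_analytic_continuation :
    ∃ G : ℂ → ℂ → ℂ,
      (∀ s : ℂ, s ≠ 1 → ∀ w ∉ negRay,
        DifferentiableAt ℂ (fun s' => G s' w) s ∧
        DifferentiableAt ℂ (fun w' => G s w') w) ∧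
      (∀ s w : ℂ, 1 < s.re → w ∉ negRay →
        G s w = ∑' n : ℕ, ((n : ℂ) + w) ^ (-s)) ∧
      (∀ w ∉ negRay,
        Tendsto (fun s : ℂ => (s - 1) * G s w) (nhdsWithin 1 {(1 : ℂ)}ᶜ) (nhds 1)) := by
  simp only [notMem_negRay_iff]
  refine ⟨fun s w ↦ hurwitzZeta₁ s w / (s - 1), fun s hs w hw ↦ ⟨?_, ?_⟩, fun s w hs hw ↦ ?_,
    fun w hw ↦ ?_⟩
  · exact (differentiableAt_hurwitzZeta₁_left s hw).div (by fun_prop) (sub_ne_zero.2 hs)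
  · exact (differentiableAt_hurwitzZeta₁_right s hw).div_const _
  · have hs1 : s - 1 ≠ 0 := sub_ne_zero.2 <| by rintro rfl; simp at hs
    simp only [hurwitzZeta₁_eq_sub_one_mul_hurwitzSeries hs hw, mul_div_cancel_left₀ _ hs1,
      hurwitzSeries]
  · refine ((tendsto_hurwitzZeta₁_nhds_one hw).mono_left nhdsWithin_le_nhds).congr' ?_
    filter_upwards [self_mem_nhdsWithin] with s hs
    exact (mul_div_cancel₀ _ (sub_ne_zero.2 hs)).symm
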